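/- arXiv:2109.02709 — 2 statements merged into one kernel-verified Lean document; each statement's English description precedes it below -/
import Mathlib

section
/- Let φ be a non-trivial (non-affine) Bernstein function with φ(0) = 0 and φ(∞) = ∞, let Ψ be its inverse, let (μ_t)_{t>0} be the family of marginal laws of the subordinator associated with φ, and let p ≥ 1. Assume further that Ψ^p ∈ Lle(0,∞) with quadruple (0, β_p, γ_p, ν_p). Then (Ψ^p)'(0+) = β_p − ∫_{(0,∞)} x³/(1+x²) ν_p(dx) belongs to [0,∞), and for every t > 0, t·E[ξ_t^{−p}] = t·∫ x^{−p} μ_t(dx) = (1/Γ(p+1)) [ (Ψ^p)'(0+) + γ_p²/t + ∫_{(0,∞)} u²/(t+u) ν_p(du) ]; in particular t ↦ t·E[ξ_t^{−p}] is a Stieltjes transform. -/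
open MeasureTheory Set Filter

/-- A Bernstein function on `(0,∞)`: a nonnegative smooth function whose derivatives satisfy
`(−1)^{n−1} f^{(n)} ≥ 0` on `(0,∞)` for every `n ≥ 1`. -/
def IsBernsteinFn (f : ℝ → ℝ) : Prop :=
  (∀ x : ℝ, 0 < x → 0 ≤ f x) ∧ ContDiffOn ℝ (⊤ : ℕ∞) f (Ioi 0) ∧
    ∀ n : ℕ, 1 ≤ n → ∀ x : ℝ, 0 < x → 0 ≤ (-1 : ℝ) ^ (n - 1) * iteratedDeriv n f x

/-- A Stieltjes transform on `(0,∞)`: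
`f(λ) = d + q/λ + ∫_{(0,∞)} (λ+u)⁻¹ Δ(du)` with `d, q ≥ 0` and `Δ` a Borel measure on
`(0,∞)` integrating `(1+u)⁻¹`. -/
def IsStieltjesFn (f : ℝ → ℝ) : Prop :=
  ∃ d q : ℝ, 0 ≤ d ∧ 0 ≤ q ∧ ∃ Δ : Measure ℝ, Δ {x | x ≤ 0} = 0 ∧
    (∫⁻ u, ENNReal.ofReal ((1 + u)⁻¹) ∂Δ) < ⊤ ∧
    ∀ l : ℝ, 0 < l → f l = d + q / l + ∫ u, (l + u)⁻¹ ∂Δ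

/-!
Write `τ` for an exponential variable of rate `t`. Since `Γ(p+1) x^{-p} = p ∫ l^{p-1} e^{-lx} dl`,
the Laplace transform of `μ_t` gives `Γ(p+1) E[ξ_t^{-p}] = p ∫ l^{p-1} e^{-tφ(l)} dl`. Here
`e^{-tφ(l)} = P(τ > φ(l)) = P(Ψ(τ) > l)`, so the right-hand side is `E[Ψ(τ)^p]` by the layer cake
formula.

As `Ψ^p ≥ 0`, the jumps of its Lévy–Khintchine form can be fully compensated: convexity of
`e^{-s} - 1 + s` and Fatou's lemma give `∫ x³/(1+x²) ν_p(dx) ≤ β_p`. The drift then becomes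
`(Ψ^p)'(0+) = β_p - ∫ x³/(1+x²) ν_p(dx)`, and averaging `Ψ^p` term by term, with
`E[e^{-τx} - 1 + τx] = x² / (t(t+x))`, gives the formula.
-/

theorem ae_pos_of_measure_nonpos_eq_zero {ν : Measure ℝ} (h : ν {x | x ≤ 0} = 0) :
    ∀ᵐ x ∂ν, 0 < x := by
  simpa only [ae_iff, not_lt] using h

theorem integrable_and_integral_le_of_tendsto {α ι : Type*} {m : MeasurableSpace α}
    {μ : Measure α} {u : Filter ι} [u.NeBot] [u.IsCountablyGenerated] {F : ι → α → ℝ} {f : α → ℝ}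
    {C : ι → ℝ} {c : ℝ} (hmeas : ∀ i, AEStronglyMeasurable (F i) μ)
    (hinteg : ∀ᶠ i in u, Integrable (F i) μ) (hnonneg : ∀ᶠ i in u, 0 ≤ᵐ[μ] F i)
    (hlim : ∀ᵐ a ∂μ, Tendsto (fun i => F i a) u (nhds (f a)))
    (hle : ∀ᶠ i in u, ∫ a, F i a ∂μ ≤ C i) (hC : Tendsto C u (nhds c)) :
    Integrable f μ ∧ ∫ a, f a ∂μ ≤ c := by
  have hc : 0 ≤ c := ge_of_tendsto hC <| by
    filter_upwards [hnonneg, hle] with i h0 h1 using (integral_nonneg_of_ae h0).trans h1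
  have hfatou : ∫⁻ a, ‖f a‖ₑ ∂μ ≤ ENNReal.ofReal c :=
    calc ∫⁻ a, ‖f a‖ₑ ∂μ
        = ∫⁻ a, liminf (fun i => ‖F i a‖ₑ) u ∂μ :=
          lintegral_congr_ae (by filter_upwards [hlim] with a ha using ha.enorm.liminf_eq.symm)
      _ ≤ liminf (fun i => ∫⁻ a, ‖F i a‖ₑ ∂μ) u := lintegral_liminf_le' fun i => (hmeas i).enorm
      _ ≤ liminf (fun i => ENNReal.ofReal (C i)) u := by
          refine liminf_le_liminf ?_
          filter_upwards [hinteg, hnonneg, hle] with i hi h0 h1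
          rw [← ofReal_integral_norm_eq_lintegral_enorm hi, integral_congr_ae
            (h0.mono fun a ha => Real.norm_of_nonneg ha)]
          exact ENNReal.ofReal_le_ofReal h1
      _ = ENNReal.ofReal c := (ENNReal.tendsto_ofReal hC).liminf_eq
  have hf : Integrable f μ :=
    ⟨aestronglyMeasurable_of_tendsto_ae u hmeas hlim, hfatou.trans_lt ENNReal.ofReal_lt_top⟩
  refine ⟨hf, (integral_mono hf hf.norm fun a => Real.le_norm_self (f a)).trans ?_⟩
  rwa [← ENNReal.ofReal_le_ofReal_iff hc, ofReal_integral_norm_eq_lintegral_enorm hf]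

section CompensatedExp

/-- The kernel `e^{−s} − 1 + s` of a Lévy–Khintchine exponent whose jumps are fully compensated. -/
noncomputable def compensatedExp (s : ℝ) : ℝ := Real.exp (-s) - 1 + s

@[fun_prop]
theorem continuous_compensatedExp : Continuous compensatedExp := by
  unfold compensatedExp
  fun_prop

@[simp]
theorem compensatedExp_zero : compensatedExp 0 = 0 := by simp [compensatedExp]

theorem compensatedExp_nonneg (s : ℝ) : 0 ≤ compensatedExp s := by
  unfold compensatedExp
  linarith [Real.one_sub_le_exp_neg s]

theorem compensatedExp_le_mul_min {s : ℝ} (hs : 0 ≤ s) : compensatedExp s ≤ s * min s 1 := by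
  rw [compensatedExp, mul_min_of_nonneg _ _ hs, mul_one, le_min_iff]
  have hexp_le_one : Real.exp (-s) ≤ 1 := Real.exp_le_one_iff.2 (neg_nonpos.2 hs)
  refine ⟨?_, by linarith⟩
  rcases le_total s 1 with hs1 | hs1
  · have := Real.abs_exp_sub_one_sub_id_le (x := -s) (by rwa [abs_neg, abs_of_nonneg hs])
    linarith [le_abs_self (Real.exp (-s) - 1 - -s), neg_sq s, sq s]
  · linarith [le_mul_of_one_le_left hs hs1]

theorem convexOn_compensatedExp : ConvexOn ℝ univ compensatedExp := by
  have hexp : ConvexOn ℝ univ fun s : ℝ => Real.exp (-s) :=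
    convexOn_exp.comp_linearMap (-LinearMap.id)
  exact (hexp.add_const (-1)).add (convexOn_id convex_univ)

theorem compensatedExp_mul_le {l : ℝ} (hl0 : 0 ≤ l) (hl1 : l ≤ 1) (x : ℝ) :
    compensatedExp (l * x) ≤ l * compensatedExp x := by
  simpa using convexOn_compensatedExp.2 (mem_univ x) (mem_univ 0) hl0 (sub_nonneg.2 hl1)
    (add_sub_cancel l 1)

theorem hasDerivAt_compensatedExp_mul (x l : ℝ) :
    HasDerivAt (fun l => compensatedExp (l * x)) (x * (1 - Real.exp (-(l * x)))) l := by
  have hmul : HasDerivAt (fun l => l * x) x l := by simpa using (hasDerivAt_id l).mul_const x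
  exact ((hmul.fun_neg.exp.sub_const 1).add hmul).congr_deriv (by ring)

theorem tendsto_inv_mul_compensatedExp_mul (x : ℝ) :
    Tendsto (fun l : ℝ => l⁻¹ * compensatedExp (l * x)) (nhdsWithin 0 (Ioi 0)) (nhds 0) := by
  simpa using (hasDerivAt_compensatedExp_mul x 0).tendsto_slope_zero_right

theorem norm_mul_one_sub_exp_neg_le {x y : ℝ} (hx : 0 ≤ x) (hy : 0 ≤ y) :
    ‖x * (1 - Real.exp (-(y * x)))‖ ≤ x * min (y * x) 1 := by
  have hexp_le_one : Real.exp (-(y * x)) ≤ 1 :=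
    Real.exp_le_one_iff.2 (neg_nonpos.2 (mul_nonneg hy hx))
  rw [Real.norm_of_nonneg (mul_nonneg hx (sub_nonneg.2 hexp_le_one))]
  gcongr
  exact le_min (by linarith [Real.one_sub_le_exp_neg (y * x)])
    (by linarith [Real.exp_pos (-(y * x))])

end CompensatedExp

section LevyMeasure

/-- A Lévy measure carried by `(0,∞)`. -/
structure IsLevyMeasureOnIoi (ν : Measure ℝ) : Prop where
  measure_nonpos : ν {x | x ≤ 0} = 0
  lintegral_min_sq_one_lt_top : ∫⁻ x, ENNReal.ofReal (min (x ^ 2) 1) ∂ν < ⊤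

/-- The kernel of a Lévy–Khintchine exponent, compensated with the truncation `x / (1 + x²)`. -/
noncomputable def levyKernel (l x : ℝ) : ℝ := Real.exp (-l * x) - 1 + l * x / (1 + x ^ 2)

/-- The function of the class `Lle(0,∞)` with quadruple `(0, β, γ, ν)`. -/
noncomputable def levyKhintchine (β γ : ℝ) (ν : Measure ℝ) (l : ℝ) : ℝ :=
  β * l + γ ^ 2 / 2 * l ^ 2 + ∫ x, levyKernel l x ∂ν

/-- The Lévy–Khintchine exponent with fully compensated jumps; its drift `c` is then its derivative
at `0`. -/
noncomputable def centeredExponent (c γ : ℝ) (ν : Measure ℝ) (l : ℝ) : ℝ :=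
  c * l + γ ^ 2 / 2 * l ^ 2 + ∫ x, compensatedExp (l * x) ∂ν

theorem levyKernel_eq (l x : ℝ) :
    levyKernel l x = compensatedExp (l * x) - l * (x ^ 3 / (1 + x ^ 2)) := by
  rw [levyKernel, compensatedExp, neg_mul]
  field_simp
  ring

@[fun_prop]
theorem continuous_levyKernel (l : ℝ) : Continuous (levyKernel l) := by
  unfold levyKernel
  fun_prop (disch := intro x; positivity)

theorem abs_levyKernel_le {l x : ℝ} (hl : 0 ≤ l) (hx : 0 ≤ x) :
    |levyKernel l x| ≤ (1 + l) ^ 2 * min (x ^ 2) 1 := by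
  have hexp_le_one : Real.exp (-l * x) ≤ 1 := Real.exp_le_one_iff.2 (by nlinarith)
  have hdrift_nonneg : 0 ≤ l * x / (1 + x ^ 2) := by positivity
  have hdrift_le : l * x / (1 + x ^ 2) ≤ l := by
    rw [div_le_iff₀ (by positivity)]
    nlinarith [mul_nonneg hl (sq_nonneg (x - 1)), mul_nonneg hl hx]
  have hcube_nonneg : 0 ≤ x ^ 3 / (1 + x ^ 2) := by positivity
  have hcube_le : x ^ 3 / (1 + x ^ 2) ≤ x ^ 2 := by
    rw [div_le_iff₀ (by positivity)]
    nlinarith [mul_nonneg (sq_nonneg x) (sq_nonneg (x - 1)), mul_nonneg (sq_nonneg x) hx]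
  have hcomp_le : compensatedExp (l * x) ≤ l ^ 2 * x ^ 2 :=
    calc compensatedExp (l * x) ≤ l * x * min (l * x) 1 := compensatedExp_le_mul_min (by positivity)
      _ ≤ l * x * (l * x) := by gcongr; exact min_le_left _ _
      _ = l ^ 2 * x ^ 2 := by ring
  rw [mul_min_of_nonneg _ _ (by positivity), mul_one, le_min_iff, abs_le, abs_le]
  refine ⟨⟨?_, ?_⟩, ?_, ?_⟩
  · rw [levyKernel_eq]
    nlinarith [compensatedExp_nonneg (l * x), mul_le_mul_of_nonneg_left hcube_le hl, sq_nonneg x,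
      mul_nonneg hl (sq_nonneg x), mul_nonneg (sq_nonneg l) (sq_nonneg x)]
  · rw [levyKernel_eq]
    nlinarith [mul_nonneg hl hcube_nonneg, mul_nonneg hl (sq_nonneg x), sq_nonneg x]
  · rw [levyKernel]
    nlinarith [Real.exp_pos (-l * x)]
  · rw [levyKernel]
    nlinarith

namespace IsLevyMeasureOnIoi

variable {ν : Measure ℝ}

theorem ae_pos (hν : IsLevyMeasureOnIoi ν) : ∀ᵐ x ∂ν, 0 < x :=
  ae_pos_of_measure_nonpos_eq_zero hν.measure_nonpos

theorem sFinite (hν : IsLevyMeasureOnIoi ν) : SFinite ν := by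
  have := isFiniteMeasure_withDensity hν.lintegral_min_sq_one_lt_top.ne
  refine sFinite_of_absolutelyContinuous (withDensity_absolutelyContinuous'
    (f := fun x : ℝ => ENNReal.ofReal (min (x ^ 2) 1)) (by fun_prop) ?_)
  filter_upwards [hν.ae_pos] with x hx
  exact (ENNReal.ofReal_pos.2 (by positivity)).ne'

theorem integrable_min_sq_one (hν : IsLevyMeasureOnIoi ν) :
    Integrable (fun x => min (x ^ 2) 1) ν := by
  refine ⟨by fun_prop, ?_⟩
  rw [hasFiniteIntegral_iff_ofReal (ae_of_all _ fun x => by positivity)]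
  exact hν.lintegral_min_sq_one_lt_top

theorem integrable_levyKernel (hν : IsLevyMeasureOnIoi ν) {l : ℝ} (hl : 0 ≤ l) :
    Integrable (levyKernel l) ν := by
  refine (hν.integrable_min_sq_one.const_mul ((1 + l) ^ 2)).mono' (by fun_prop) ?_
  filter_upwards [hν.ae_pos] with x hx using abs_levyKernel_le hl hx.le

theorem integrable_mul_min_one (hν : IsLevyMeasureOnIoi ν)
    (hcube : Integrable (fun x => x ^ 3 / (1 + x ^ 2)) ν) :
    Integrable (fun x => x * min x 1) ν := by
  refine (hν.integrable_min_sq_one.add (hcube.const_mul 2)).mono' (by fun_prop) ?_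
  filter_upwards [hν.ae_pos] with x hx
  rw [Real.norm_of_nonneg (by positivity), Pi.add_apply]
  have hcube_nonneg : 0 ≤ x ^ 3 / (1 + x ^ 2) := by positivity
  rcases le_total x 1 with hx1 | hx1
  · rw [min_eq_left hx1, min_eq_left (by nlinarith)]
    linarith [sq x]
  · have hle_cube : x ≤ 2 * (x ^ 3 / (1 + x ^ 2)) := by
      rw [← mul_div_assoc, le_div_iff₀ (by positivity)]
      nlinarith [mul_nonneg hx.le (show 0 ≤ x ^ 2 - 1 by nlinarith)]
    rw [min_eq_right hx1, min_eq_right (by nlinarith)]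
    linarith

-- As `l ↓ 0`, convexity makes `compensatedExp x - l⁻¹ * compensatedExp (l * x)` nonnegative with
-- limit `compensatedExp x`, and the truncations cancel in this difference; Fatou's lemma applies.
theorem integrable_compensatedExp_and_integral_le (hν : IsLevyMeasureOnIoi ν) {β γ : ℝ}
    (hnonneg : ∀ l, 0 < l → 0 ≤ levyKhintchine β γ ν l) :
    Integrable compensatedExp ν ∧ ∫ x, compensatedExp x ∂ν ≤ β + ∫ x, levyKernel 1 x ∂ν := by
  have hdiff (l : ℝ) (hl : 0 < l) : (fun x => compensatedExp x - l⁻¹ * compensatedExp (l * x)) =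
      fun x => levyKernel 1 x - l⁻¹ * levyKernel l x := by
    funext x
    rw [levyKernel_eq, levyKernel_eq]
    field_simp
    ring
  have hinteg (l : ℝ) (hl : 0 < l) := (hν.integrable_levyKernel hl.le).const_mul l⁻¹
  have hpos : ∀ᶠ l : ℝ in nhdsWithin 0 (Ioi 0), 0 < l := eventually_mem_nhdsWithin
  refine integrable_and_integral_le_of_tendsto (u := nhdsWithin 0 (Ioi 0))
    (F := fun l x => compensatedExp x - l⁻¹ * compensatedExp (l * x))
    (C := fun l => β + γ ^ 2 / 2 * l + ∫ x, levyKernel 1 x ∂ν) (fun l => by fun_prop) ?_ ?_ ?_ ?_ ?_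
  · filter_upwards [hpos] with l hl
    rw [hdiff l hl]
    exact (hν.integrable_levyKernel zero_le_one).sub (hinteg l hl)
  · filter_upwards [Ioc_mem_nhdsGT (zero_lt_one' ℝ)] with l ⟨hl0, hl1⟩
    refine ae_of_all _ fun x => sub_nonneg.2 ?_
    rw [inv_mul_le_iff₀ hl0]
    exact compensatedExp_mul_le hl0.le hl1 x
  · refine ae_of_all _ fun x => ?_
    simpa using (tendsto_inv_mul_compensatedExp_mul x).const_sub (compensatedExp x)
  · filter_upwards [hpos] with l hl
    rw [hdiff l hl, integral_sub (hν.integrable_levyKernel zero_le_one) (hinteg l hl),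
      integral_const_mul]
    have hscaled : 0 ≤ l⁻¹ * levyKhintchine β γ ν l :=
      mul_nonneg (inv_nonneg.2 hl.le) (hnonneg l hl)
    have hexpand : l⁻¹ * levyKhintchine β γ ν l =
        β + γ ^ 2 / 2 * l + l⁻¹ * ∫ x, levyKernel l x ∂ν := by
      rw [levyKhintchine]
      field_simp
    linarith
  · have hcont : Continuous fun l : ℝ => β + γ ^ 2 / 2 * l + ∫ x, levyKernel 1 x ∂ν := by fun_prop
    simpa using (hcont.tendsto 0).mono_left nhdsWithin_le_nhds

theorem integrable_cube_div_and_integral_le (hν : IsLevyMeasureOnIoi ν) {β γ : ℝ}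
    (hnonneg : ∀ l, 0 < l → 0 ≤ levyKhintchine β γ ν l) :
    Integrable (fun x => x ^ 3 / (1 + x ^ 2)) ν ∧ ∫ x, x ^ 3 / (1 + x ^ 2) ∂ν ≤ β := by
  obtain ⟨hinteg, hle⟩ := hν.integrable_compensatedExp_and_integral_le hnonneg
  have hker := hν.integrable_levyKernel zero_le_one
  have hcube : (fun x : ℝ => x ^ 3 / (1 + x ^ 2)) = fun x => compensatedExp x - levyKernel 1 x := by
    funext x
    simp [levyKernel_eq]
  rw [hcube, integral_sub hinteg hker]
  exact ⟨hinteg.sub hker, by linarith⟩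

end IsLevyMeasureOnIoi

end LevyMeasure

section CenteredExponent

variable {ν : Measure ℝ}

theorem min_mul_one_le {x y : ℝ} (hx : 0 ≤ x) : min (y * x) 1 ≤ max y 1 * min x 1 := by
  rcases le_total x 1 with hx1 | hx1
  · rw [min_eq_left hx1]
    exact (min_le_left _ _).trans (mul_le_mul_of_nonneg_right (le_max_left _ _) hx)
  · rw [min_eq_right hx1, mul_one]
    exact (min_le_right _ _).trans (le_max_right _ _)

theorem integrable_compensatedExp_mul (hpos : ∀ᵐ x ∂ν, 0 < x)
    (hinteg : Integrable (fun x => x * min x 1) ν) {y : ℝ} (hy : 0 ≤ y) :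
    Integrable (fun x => compensatedExp (y * x)) ν := by
  refine (hinteg.const_mul (y * max y 1)).mono' (by fun_prop) ?_
  filter_upwards [hpos] with x hx
  rw [Real.norm_of_nonneg (compensatedExp_nonneg _)]
  calc compensatedExp (y * x) ≤ y * x * min (y * x) 1 := compensatedExp_le_mul_min (by positivity)
    _ ≤ y * x * (max y 1 * min x 1) := by gcongr; exact min_mul_one_le hx.le
    _ = y * max y 1 * (x * min x 1) := by ring

theorem integrable_sq_div_add (hpos : ∀ᵐ x ∂ν, 0 < x)
    (hinteg : Integrable (fun x => x * min x 1) ν) {t : ℝ} (ht : 0 < t) :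
    Integrable (fun x => x ^ 2 / (t + x)) ν := by
  refine (hinteg.const_mul (max t⁻¹ 1)).mono' (Measurable.aestronglyMeasurable (by fun_prop)) ?_
  filter_upwards [hpos] with x hx
  have hquot_le : x / (t + x) ≤ min (t⁻¹ * x) 1 :=
    le_min (by rw [inv_mul_eq_div]; gcongr; linarith)
      (div_le_one_of_le₀ (by linarith) (by linarith))
  rw [Real.norm_of_nonneg (by positivity)]
  calc x ^ 2 / (t + x) = x * (x / (t + x)) := by ring
    _ ≤ x * (max t⁻¹ 1 * min x 1) := by gcongr; exact hquot_le.trans (min_mul_one_le hx.le)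
    _ = max t⁻¹ 1 * (x * min x 1) := by ring

theorem integral_sq_div_add_nonneg (hpos : ∀ᵐ x ∂ν, 0 < x) {t : ℝ} (ht : 0 < t) :
    0 ≤ ∫ u, u ^ 2 / (t + u) ∂ν :=
  integral_nonneg_of_ae (by filter_upwards [hpos] with x hx using by positivity)

theorem norm_mul_one_sub_exp_neg_le_of_le {x y b : ℝ} (hx : 0 ≤ x) (hy : 0 ≤ y) (hyb : y ≤ b) :
    ‖x * (1 - Real.exp (-(y * x)))‖ ≤ max b 1 * (x * min x 1) :=
  calc ‖x * (1 - Real.exp (-(y * x)))‖ ≤ x * min (y * x) 1 := norm_mul_one_sub_exp_neg_le hx hy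
    _ ≤ x * (max y 1 * min x 1) := by gcongr; exact min_mul_one_le hx
    _ ≤ x * (max b 1 * min x 1) := by gcongr
    _ = max b 1 * (x * min x 1) := by ring

theorem hasDerivAt_integral_compensatedExp_mul (hpos : ∀ᵐ x ∂ν, 0 < x)
    (hinteg : Integrable (fun x => x * min x 1) ν) {y : ℝ} (hy : 0 < y) :
    HasDerivAt (fun y => ∫ x, compensatedExp (y * x) ∂ν)
      (∫ x, x * (1 - Real.exp (-(y * x))) ∂ν) y := by
  refine (hasDerivAt_integral_of_dominated_loc_of_deriv_le
    (F' := fun y x => x * (1 - Real.exp (-(y * x)))) (Ioo_mem_nhds hy (lt_add_one y))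
    (Eventually.of_forall fun z => by fun_prop) (integrable_compensatedExp_mul hpos hinteg hy.le)
    (by fun_prop) ?_ (hinteg.const_mul (max (y + 1) 1)) ?_).2
  · filter_upwards [hpos] with x hx z hz
    exact norm_mul_one_sub_exp_neg_le_of_le hx.le hz.1.le hz.2.le
  · exact ae_of_all _ fun x z _ => hasDerivAt_compensatedExp_mul x z

theorem tendsto_integral_mul_one_sub_exp_neg (hpos : ∀ᵐ x ∂ν, 0 < x)
    (hinteg : Integrable (fun x => x * min x 1) ν) :
    Tendsto (fun y => ∫ x, x * (1 - Real.exp (-(y * x))) ∂ν) (nhdsWithin 0 (Ioi 0)) (nhds 0) := by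
  have hlim := tendsto_integral_filter_of_dominated_convergence (μ := ν) (f := fun _ => 0)
    (F := fun y x => x * (1 - Real.exp (-(y * x)))) (l := nhdsWithin 0 (Ioi 0))
    (fun x => max 1 1 * (x * min x 1)) (Eventually.of_forall fun y => by fun_prop) ?_
    (hinteg.const_mul _) (ae_of_all _ fun x => ?_)
  · simpa using hlim
  · filter_upwards [Ioc_mem_nhdsGT (zero_lt_one' ℝ)] with y ⟨hy0, hy1⟩
    filter_upwards [hpos] with x hx using norm_mul_one_sub_exp_neg_le_of_le hx.le hy0.le hy1
  · have hcont : Continuous fun y => x * (1 - Real.exp (-(y * x))) := by fun_prop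
    simpa using (hcont.tendsto 0).mono_left nhdsWithin_le_nhds

theorem IsLevyMeasureOnIoi.levyKhintchine_eq_centeredExponent (hν : IsLevyMeasureOnIoi ν)
    (hcube : Integrable (fun x => x ^ 3 / (1 + x ^ 2)) ν) (β γ : ℝ) {l : ℝ} (hl : 0 ≤ l) :
    levyKhintchine β γ ν l = centeredExponent (β - ∫ x, x ^ 3 / (1 + x ^ 2) ∂ν) γ ν l := by
  have hcomp := integrable_compensatedExp_mul hν.ae_pos (hν.integrable_mul_min_one hcube) hl
  rw [levyKhintchine, centeredExponent,
    integral_congr_ae (ae_of_all ν fun x => levyKernel_eq l x),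
    integral_sub hcomp (hcube.const_mul l), integral_const_mul]
  ring

theorem hasDerivAt_centeredExponent (hpos : ∀ᵐ x ∂ν, 0 < x)
    (hinteg : Integrable (fun x => x * min x 1) ν) (c γ : ℝ) {y : ℝ} (hy : 0 < y) :
    HasDerivAt (centeredExponent c γ ν)
      (c + γ ^ 2 * y + ∫ x, x * (1 - Real.exp (-(y * x))) ∂ν) y := by
  have hlin : HasDerivAt (fun y => c * y) c y := by simpa using (hasDerivAt_id y).const_mul c
  have hsq : HasDerivAt (fun y => γ ^ 2 / 2 * y ^ 2) (γ ^ 2 * y) y :=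
    ((hasDerivAt_pow 2 y).const_mul (γ ^ 2 / 2)).congr_deriv (by ring)
  exact (hlin.add hsq).add (hasDerivAt_integral_compensatedExp_mul hpos hinteg hy)

theorem tendsto_deriv_of_eqOn_centeredExponent (hpos : ∀ᵐ x ∂ν, 0 < x)
    (hinteg : Integrable (fun x => x * min x 1) ν) {c γ : ℝ} {f : ℝ → ℝ}
    (hf : EqOn f (centeredExponent c γ ν) (Ioi 0)) :
    Tendsto (deriv f) (nhdsWithin 0 (Ioi 0)) (nhds c) := by
  have hpoly : Tendsto (fun y => c + γ ^ 2 * y) (nhdsWithin 0 (Ioi 0)) (nhds c) := by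
    have hcont : Continuous fun y => c + γ ^ 2 * y := by fun_prop
    simpa using (hcont.tendsto 0).mono_left nhdsWithin_le_nhds
  have hlim := hpoly.add (tendsto_integral_mul_one_sub_exp_neg hpos hinteg)
  rw [add_zero] at hlim
  refine hlim.congr' ?_
  filter_upwards [eventually_mem_nhdsWithin] with y hy
  exact (((hasDerivAt_centeredExponent hpos hinteg c γ hy).congr_of_eventuallyEq
    (hf.eventuallyEq_of_mem (Ioi_mem_nhds hy))).deriv).symm

end CenteredExponent

section ExponentialLaw

open ProbabilityTheory

variable {t : ℝ}

theorem ae_pos_expMeasure (ht : 0 < t) : ∀ᵐ y ∂expMeasure t, 0 < y := by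
  have := isProbabilityMeasure_expMeasure ht
  have hIic := ofReal_cdf (expMeasure t) 0
  rw [cdf_expMeasure_eq ht] at hIic
  exact ae_pos_of_measure_nonpos_eq_zero (hIic.symm.trans (by simp))

theorem expMeasure_Ioi (ht : 0 < t) {s : ℝ} (hs : 0 ≤ s) :
    expMeasure t (Ioi s) = ENNReal.ofReal (Real.exp (-(t * s))) := by
  have := isProbabilityMeasure_expMeasure ht
  rw [← compl_Iic, prob_compl_eq_one_sub measurableSet_Iic, ← ofReal_cdf, cdf_expMeasure_eq ht,
    if_pos hs, ← ENNReal.ofReal_one, ← ENNReal.ofReal_sub, sub_sub_cancel]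
  exact sub_nonneg.2 (Real.exp_le_one_iff.2 (neg_nonpos.2 (mul_nonneg ht.le hs)))

theorem integral_expMeasure (ht : 0 < t) (f : ℝ → ℝ) :
    ∫ y, f y ∂expMeasure t = ∫ y in Ioi 0, t * Real.exp (-(t * y)) * f y := by
  have hdensity : expMeasure t = volume.withDensity (exponentialPDF t) := rfl
  have hmeas : Measurable (exponentialPDF t) := (measurable_exponentialPDFReal t).ennreal_ofReal
  rw [← Measure.restrict_eq_self_of_ae_mem (s := Ioi 0) (ae_pos_expMeasure ht), hdensity,
    setIntegral_withDensity_eq_setIntegral_toReal_smul hmeas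
      (ae_of_all _ fun y => ENNReal.ofReal_lt_top) _ measurableSet_Ioi]
  refine setIntegral_congr_fun measurableSet_Ioi fun y (hy : 0 < y) => ?_
  simp only [exponentialPDF_of_nonneg hy.le, smul_eq_mul]
  rw [ENNReal.toReal_ofReal (by positivity)]

theorem integral_pow_mul_exp_neg_mul_expMeasure (ht : 0 < t) (n : ℕ) {s : ℝ} (hs : 0 ≤ s) :
    ∫ y, y ^ n * Real.exp (-(s * y)) ∂expMeasure t = t * n.factorial / (t + s) ^ (n + 1) := by
  have hgamma := Real.integral_rpow_mul_exp_neg_mul_Ioi (a := n + 1) (by positivity)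
    (add_pos_of_pos_of_nonneg ht hs)
  rw [integral_expMeasure ht]
  calc ∫ y in Ioi 0, t * Real.exp (-(t * y)) * (y ^ n * Real.exp (-(s * y)))
      = ∫ y in Ioi 0, t * (y ^ ((n : ℝ) + 1 - 1) * Real.exp (-((t + s) * y))) := by
        refine integral_congr_ae (ae_of_all _ fun y => ?_)
        simp only [add_sub_cancel_right, Real.rpow_natCast, add_mul, neg_add, Real.exp_add]
        ring
    _ = t * n.factorial / (t + s) ^ (n + 1) := by
        rw [integral_const_mul, hgamma, Real.Gamma_nat_eq_factorial]
        norm_cast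
        rw [one_div, inv_pow]
        ring

theorem integrable_pow_mul_exp_neg_mul_expMeasure (ht : 0 < t) (n : ℕ) {s : ℝ} (hs : 0 ≤ s) :
    Integrable (fun y => y ^ n * Real.exp (-(s * y))) (expMeasure t) :=
  .of_integral_ne_zero <| by
    rw [integral_pow_mul_exp_neg_mul_expMeasure ht n hs]
    positivity

theorem integrable_pow_expMeasure (ht : 0 < t) (n : ℕ) :
    Integrable (fun y => y ^ n) (expMeasure t) := by
  simpa using integrable_pow_mul_exp_neg_mul_expMeasure ht n le_rfl

theorem integral_pow_expMeasure (ht : 0 < t) (n : ℕ) :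
    ∫ y, y ^ n ∂expMeasure t = n.factorial / t ^ n := by
  have hmoment := integral_pow_mul_exp_neg_mul_expMeasure ht n le_rfl
  simp only [zero_mul, neg_zero, Real.exp_zero, mul_one, add_zero] at hmoment
  rw [hmoment, pow_succ', mul_div_mul_left _ _ ht.ne']

theorem integrable_compensatedExp_mul_expMeasure (ht : 0 < t) {x : ℝ} (hx : 0 ≤ x) :
    Integrable (fun y => compensatedExp (y * x)) (expMeasure t) := by
  have := isProbabilityMeasure_expMeasure ht
  have hexp := integrable_pow_mul_exp_neg_mul_expMeasure ht 0 hx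
  have hid := integrable_pow_expMeasure ht 1
  simp only [pow_zero, one_mul, pow_one, mul_comm x] at hexp hid
  exact (hexp.sub (integrable_const 1)).add (hid.mul_const x)

theorem integral_compensatedExp_mul_expMeasure (ht : 0 < t) {x : ℝ} (hx : 0 ≤ x) :
    ∫ y, compensatedExp (y * x) ∂expMeasure t = t⁻¹ * (x ^ 2 / (t + x)) := by
  have := isProbabilityMeasure_expMeasure ht
  have hexp := integrable_pow_mul_exp_neg_mul_expMeasure ht 0 hx
  have hexp_eq := integral_pow_mul_exp_neg_mul_expMeasure ht 0 hx
  have hid := integrable_pow_expMeasure ht 1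
  have hid_eq := integral_pow_expMeasure ht 1
  simp only [pow_zero, one_mul, pow_one, mul_comm x, Nat.factorial_zero, Nat.factorial_one,
    Nat.cast_one, mul_one, zero_add] at hexp hexp_eq hid hid_eq
  have hsub : Integrable (fun y => Real.exp (-(y * x)) - 1) (expMeasure t) :=
    hexp.sub (integrable_const 1)
  have htx : t + x ≠ 0 := by positivity
  calc ∫ y, compensatedExp (y * x) ∂expMeasure t = t / (t + x) - 1 + 1 / t * x := by
        unfold compensatedExp
        rw [integral_add hsub (hid.mul_const x), integral_sub hexp (integrable_const 1), hexp_eq,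
          integral_mul_const, hid_eq, integral_const, probReal_univ, one_smul]
    _ = t⁻¹ * (x ^ 2 / (t + x)) := by
        field_simp
        ring

theorem integrable_quadratic_expMeasure (ht : 0 < t) (a b : ℝ) :
    Integrable (fun y => a * y + b * y ^ 2) (expMeasure t) := by
  have hid := integrable_pow_expMeasure ht 1
  simp only [pow_one] at hid
  exact (hid.const_mul a).add ((integrable_pow_expMeasure ht 2).const_mul b)

theorem integral_quadratic_expMeasure (ht : 0 < t) (a b : ℝ) :
    ∫ y, a * y + b * y ^ 2 ∂expMeasure t = a / t + 2 * b / t ^ 2 := by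
  have hid := integrable_pow_expMeasure ht 1
  have hid_eq := integral_pow_expMeasure ht 1
  simp only [pow_one] at hid hid_eq
  rw [integral_add (hid.const_mul a) ((integrable_pow_expMeasure ht 2).const_mul b),
    integral_const_mul, integral_const_mul, hid_eq, integral_pow_expMeasure ht 2,
    Nat.factorial_one, Nat.factorial_two]
  push_cast
  ring

variable {ν : Measure ℝ} [SFinite ν]

theorem lintegral_integral_compensatedExp_expMeasure (hpos : ∀ᵐ x ∂ν, 0 < x)
    (hinteg : Integrable (fun x => x * min x 1) ν) (ht : 0 < t) :
    ∫⁻ y, ENNReal.ofReal (∫ x, compensatedExp (y * x) ∂ν) ∂expMeasure t =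
      ENNReal.ofReal (t⁻¹ * ∫ u, u ^ 2 / (t + u) ∂ν) := by
  have := isProbabilityMeasure_expMeasure ht
  calc ∫⁻ y, ENNReal.ofReal (∫ x, compensatedExp (y * x) ∂ν) ∂expMeasure t
      = ∫⁻ y, ∫⁻ x, ENNReal.ofReal (compensatedExp (y * x)) ∂ν ∂expMeasure t := by
        refine lintegral_congr_ae ?_
        filter_upwards [ae_pos_expMeasure ht] with y hy
        exact ofReal_integral_eq_lintegral_ofReal (integrable_compensatedExp_mul hpos hinteg hy.le)
          (ae_of_all _ fun x => compensatedExp_nonneg _)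
    _ = ∫⁻ x, ∫⁻ y, ENNReal.ofReal (compensatedExp (y * x)) ∂expMeasure t ∂ν :=
        lintegral_lintegral_swap (by fun_prop)
    _ = ∫⁻ x, ENNReal.ofReal (t⁻¹ * (x ^ 2 / (t + x))) ∂ν := by
        refine lintegral_congr_ae ?_
        filter_upwards [hpos] with x hx
        rw [← integral_compensatedExp_mul_expMeasure ht hx.le,
          ofReal_integral_eq_lintegral_ofReal (integrable_compensatedExp_mul_expMeasure ht hx.le)
            (ae_of_all _ fun y => compensatedExp_nonneg _)]
    _ = ENNReal.ofReal (t⁻¹ * ∫ u, u ^ 2 / (t + u) ∂ν) := by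
        rw [← integral_const_mul, ofReal_integral_eq_lintegral_ofReal
          ((integrable_sq_div_add hpos hinteg ht).const_mul t⁻¹)]
        filter_upwards [hpos] with x hx using by positivity

theorem lintegral_centeredExponent_expMeasure (hpos : ∀ᵐ x ∂ν, 0 < x)
    (hinteg : Integrable (fun x => x * min x 1) ν) {c : ℝ} (hc : 0 ≤ c) (γ : ℝ) (ht : 0 < t) :
    ∫⁻ y, ENNReal.ofReal (centeredExponent c γ ν y) ∂expMeasure t =
      ENNReal.ofReal (t⁻¹ * (c + γ ^ 2 / t + ∫ u, u ^ 2 / (t + u) ∂ν)) := by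
  have hquad_nonneg : ∀ᵐ y ∂expMeasure t, 0 ≤ c * y + γ ^ 2 / 2 * y ^ 2 := by
    filter_upwards [ae_pos_expMeasure ht] with y hy using by positivity
  calc ∫⁻ y, ENNReal.ofReal (centeredExponent c γ ν y) ∂expMeasure t
      = ∫⁻ y, ENNReal.ofReal (c * y + γ ^ 2 / 2 * y ^ 2) +
          ENNReal.ofReal (∫ x, compensatedExp (y * x) ∂ν) ∂expMeasure t := by
        refine lintegral_congr_ae ?_
        filter_upwards [hquad_nonneg] with y hy
        exact ENNReal.ofReal_add hy (integral_nonneg fun x => compensatedExp_nonneg _)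
    _ = ENNReal.ofReal (c / t + 2 * (γ ^ 2 / 2) / t ^ 2) +
          ENNReal.ofReal (t⁻¹ * ∫ u, u ^ 2 / (t + u) ∂ν) := by
        rw [lintegral_add_left (by fun_prop), ← ofReal_integral_eq_lintegral_ofReal
          (integrable_quadratic_expMeasure ht _ _) hquad_nonneg, integral_quadratic_expMeasure ht,
          lintegral_integral_compensatedExp_expMeasure hpos hinteg ht]
    _ = ENNReal.ofReal (t⁻¹ * (c + γ ^ 2 / t + ∫ u, u ^ 2 / (t + u) ∂ν)) := by
        have hjump_nonneg := integral_sq_div_add_nonneg hpos ht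
        rw [← ENNReal.ofReal_add (by positivity) (by positivity)]
        congr 1
        field_simp

end ExponentialLaw

section LaplaceTransform

variable {m : Measure ℝ}

theorem integrable_exp_neg_mul [IsFiniteMeasure m] (hpos : ∀ᵐ x ∂m, 0 < x) {l : ℝ} (hl : 0 ≤ l) :
    Integrable (fun x => Real.exp (-l * x)) m := by
  refine (integrable_const 1).mono' (by fun_prop) ?_
  filter_upwards [hpos] with x hx
  rw [Real.norm_of_nonneg (Real.exp_pos _).le]
  exact Real.exp_le_one_iff.2 (by nlinarith)

theorem continuousOn_integral_exp_neg_mul [IsFiniteMeasure m] (hpos : ∀ᵐ x ∂m, 0 < x) :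
    ContinuousOn (fun l => ∫ x, Real.exp (-l * x) ∂m) (Ici 0) := by
  refine continuousOn_of_dominated (bound := fun _ => 1) (fun l _ => by fun_prop)
    (fun l (hl : 0 ≤ l) => ?_) (integrable_const 1) (ae_of_all _ fun x => by fun_prop)
  filter_upwards [hpos] with x hx
  rw [Real.norm_of_nonneg (Real.exp_pos _).le]
  exact Real.exp_le_one_iff.2 (by nlinarith)

theorem antitoneOn_integral_exp_neg_mul [IsFiniteMeasure m] (hpos : ∀ᵐ x ∂m, 0 < x) :
    AntitoneOn (fun l => ∫ x, Real.exp (-l * x) ∂m) (Ici 0) := fun a ha b hb hab => by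
  refine integral_mono_ae (integrable_exp_neg_mul hpos hb) (integrable_exp_neg_mul hpos ha) ?_
  filter_upwards [hpos] with x hx
  gcongr

theorem lintegral_exp_neg_mul_mul_rpow {p x : ℝ} (hp : 0 < p) (hx : 0 < x) :
    ∫⁻ l in Ioi 0, ENNReal.ofReal (Real.exp (-l * x)) * ENNReal.ofReal (l ^ (p - 1)) =
      ENNReal.ofReal (Real.Gamma p) * ENNReal.ofReal (x ^ (-p)) := by
  have heq : ∫ l in Ioi 0, l ^ (p - 1) * Real.exp (-(x * l)) = Real.Gamma p * x ^ (-p) := by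
    rw [Real.integral_rpow_mul_exp_neg_mul_Ioi hp hx, one_div, Real.inv_rpow hx.le,
      ← Real.rpow_neg hx.le, mul_comm]
  have hgamma_pos : 0 < Real.Gamma p := Real.Gamma_pos_of_pos hp
  have hinteg : IntegrableOn (fun l => l ^ (p - 1) * Real.exp (-(x * l))) (Ioi 0) :=
    .of_integral_ne_zero (by rw [heq]; positivity)
  rw [← ENNReal.ofReal_mul hgamma_pos.le, ← heq, ofReal_integral_eq_lintegral_ofReal hinteg]
  · refine lintegral_congr fun l => ?_
    rw [← ENNReal.ofReal_mul (Real.exp_pos _).le, mul_comm, neg_mul, mul_comm l]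
  · filter_upwards [ae_restrict_mem measurableSet_Ioi] with l (hl : 0 < l) using by positivity

theorem gamma_mul_lintegral_rpow_neg [SFinite m] (hpos : ∀ᵐ x ∂m, 0 < x) {p : ℝ} (hp : 0 < p) :
    ENNReal.ofReal (Real.Gamma (p + 1)) * ∫⁻ x, ENNReal.ofReal (x ^ (-p)) ∂m =
      ENNReal.ofReal p * ∫⁻ l in Ioi 0,
        (∫⁻ x, ENNReal.ofReal (Real.exp (-l * x)) ∂m) * ENNReal.ofReal (l ^ (p - 1)) := by
  rw [Real.Gamma_add_one hp.ne', ENNReal.ofReal_mul hp.le, mul_assoc]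
  congr 1
  calc ENNReal.ofReal (Real.Gamma p) * ∫⁻ x, ENNReal.ofReal (x ^ (-p)) ∂m
      = ∫⁻ x, ENNReal.ofReal (Real.Gamma p) * ENNReal.ofReal (x ^ (-p)) ∂m :=
        (lintegral_const_mul _ (by fun_prop)).symm
    _ = ∫⁻ x, (∫⁻ l in Ioi 0,
          ENNReal.ofReal (Real.exp (-l * x)) * ENNReal.ofReal (l ^ (p - 1))) ∂m := by
        refine lintegral_congr_ae ?_
        filter_upwards [hpos] with x hx using (lintegral_exp_neg_mul_mul_rpow hp hx).symm
    _ = ∫⁻ l in Ioi 0,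
          ∫⁻ x, ENNReal.ofReal (Real.exp (-l * x)) * ENNReal.ofReal (l ^ (p - 1)) ∂m :=
        lintegral_lintegral_swap (by fun_prop)
    _ = ∫⁻ l in Ioi 0,
          (∫⁻ x, ENNReal.ofReal (Real.exp (-l * x)) ∂m) * ENNReal.ofReal (l ^ (p - 1)) :=
        lintegral_congr fun l => lintegral_mul_const _ (by fun_prop)

end LaplaceTransform

section Inverse

open ProbabilityTheory

variable {φ Ψ : ℝ → ℝ}

theorem lt_inverse_iff (hmono : MonotoneOn φ (Ici 0)) (hinv : InvOn Ψ φ (Ici 0) (Ici 0))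
    (hmaps : MapsTo Ψ (Ici 0) (Ici 0)) {l y : ℝ} (hl : 0 ≤ l) (hy : 0 ≤ y) :
    l < Ψ y ↔ φ l < y := by
  rw [← (hmono.strictMonoOn_of_injOn hinv.1.injOn).lt_iff_lt hl (hmaps hy), hinv.2 hy]

theorem monotoneOn_inverse (hmono : MonotoneOn φ (Ici 0)) (hinv : InvOn Ψ φ (Ici 0) (Ici 0))
    (hmaps : MapsTo Ψ (Ici 0) (Ici 0)) : MonotoneOn Ψ (Ici 0) := fun a ha b hb hab => by
  rw [← not_lt, lt_inverse_iff hmono hinv hmaps (hmaps hb) ha, hinv.2 hb]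
  exact hab.not_gt

theorem lintegral_inverse_rpow_expMeasure (hmono : MonotoneOn φ (Ici 0)) (h0 : φ 0 = 0)
    (hinv : InvOn Ψ φ (Ici 0) (Ici 0)) (hmaps : MapsTo Ψ (Ici 0) (Ici 0)) {t p : ℝ} (ht : 0 < t)
    (hp : 0 < p) :
    ∫⁻ y, ENNReal.ofReal (Ψ y ^ p) ∂expMeasure t =
      ENNReal.ofReal p * ∫⁻ l in Ioi 0,
        ENNReal.ofReal (Real.exp (-t * φ l)) * ENNReal.ofReal (l ^ (p - 1)) := by
  have hpos : ∀ᵐ y ∂expMeasure t, y ∈ Ici 0 := (ae_pos_expMeasure ht).mono fun y => le_of_lt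
  have hmeas : AEMeasurable Ψ (expMeasure t) := by
    rw [← Measure.restrict_eq_self_of_ae_mem hpos]
    exact aemeasurable_restrict_of_monotoneOn measurableSet_Ici
      (monotoneOn_inverse hmono hinv hmaps)
  rw [lintegral_rpow_eq_lintegral_meas_lt_mul _ (hpos.mono fun y hy => hmaps hy) hmeas hp]
  congr 1
  refine setLIntegral_congr_fun measurableSet_Ioi fun l (hl : 0 < l) => ?_
  have hφl : 0 ≤ φ l := h0.symm.le.trans (hmono self_mem_Ici hl.le hl.le)
  have hsuper : {y | l < Ψ y} =ᵐ[expMeasure t] Ioi (φ l) := by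
    filter_upwards [hpos] with y hy
    exact propext (lt_inverse_iff hmono hinv hmaps hl.le hy)
  simp only [measure_congr hsuper, expMeasure_Ioi ht hφl, neg_mul]

end Inverse

section LaplaceExponent

variable {φ : ℝ → ℝ} {m : Measure ℝ} [IsFiniteMeasure m] {t : ℝ}

theorem continuousOn_laplaceExponent (hpos : ∀ᵐ x ∂m, 0 < x) (ht : 0 < t)
    (hlaplace : ∀ l, 0 ≤ l → ∫ x, Real.exp (-l * x) ∂m = Real.exp (-t * φ l)) :
    ContinuousOn φ (Ici 0) := by
  have hlog : ContinuousOn (fun l => -(t⁻¹ * Real.log (∫ x, Real.exp (-l * x) ∂m))) (Ici 0) :=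
    (((continuousOn_integral_exp_neg_mul hpos).log fun l hl => by
      rw [hlaplace l hl]; positivity).const_mul t⁻¹).neg
  refine hlog.congr fun l hl => ?_
  simp only [hlaplace l hl, Real.log_exp]
  field_simp

theorem monotoneOn_laplaceExponent (hpos : ∀ᵐ x ∂m, 0 < x) (ht : 0 < t)
    (hlaplace : ∀ l, 0 ≤ l → ∫ x, Real.exp (-l * x) ∂m = Real.exp (-t * φ l)) :
    MonotoneOn φ (Ici 0) := fun a ha b hb hab => by
  have hle := antitoneOn_integral_exp_neg_mul hpos ha hb hab
  simp only [hlaplace a ha, hlaplace b hb, Real.exp_le_exp] at hle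
  nlinarith

theorem mapsTo_inverse_laplaceExponent {Ψ : ℝ → ℝ} (hpos : ∀ᵐ x ∂m, 0 < x) (ht : 0 < t)
    (hlaplace : ∀ l, 0 ≤ l → ∫ x, Real.exp (-l * x) ∂m = Real.exp (-t * φ l)) (h0 : φ 0 = 0)
    (hinf : Tendsto φ atTop atTop) (hinv : LeftInvOn Ψ φ (Ici 0)) : MapsTo Ψ (Ici 0) (Ici 0) := by
  have himage := (continuousOn_laplaceExponent hpos ht hlaplace).image_Ici_of_monotoneOn
    (monotoneOn_laplaceExponent hpos ht hlaplace) hinf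
  rw [h0] at himage
  exact hinv.mapsTo himage.ge

theorem gamma_mul_lintegral_rpow_neg_eq_lintegral_inverse_rpow {Ψ : ℝ → ℝ}
    (hpos : ∀ᵐ x ∂m, 0 < x) (ht : 0 < t)
    (hlaplace : ∀ l, 0 ≤ l → ∫ x, Real.exp (-l * x) ∂m = Real.exp (-t * φ l)) (h0 : φ 0 = 0)
    (hinf : Tendsto φ atTop atTop) (hinv : InvOn Ψ φ (Ici 0) (Ici 0)) {p : ℝ} (hp : 0 < p) :
    ENNReal.ofReal (Real.Gamma (p + 1)) * ∫⁻ x, ENNReal.ofReal (x ^ (-p)) ∂m =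
      ∫⁻ y, ENNReal.ofReal (Ψ y ^ p) ∂ProbabilityTheory.expMeasure t := by
  have hmono := monotoneOn_laplaceExponent hpos ht hlaplace
  have hmaps := mapsTo_inverse_laplaceExponent hpos ht hlaplace h0 hinf hinv.1
  rw [gamma_mul_lintegral_rpow_neg hpos hp,
    lintegral_inverse_rpow_expMeasure hmono h0 hinv hmaps ht hp]
  congr 1
  refine setLIntegral_congr_fun measurableSet_Ioi fun l (hl : 0 < l) => ?_
  simp only [← hlaplace l hl.le, ofReal_integral_eq_lintegral_ofReal
    (integrable_exp_neg_mul hpos hl.le) (ae_of_all _ fun _ => (Real.exp_pos _).le)]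

end LaplaceExponent

section StieltjesTransform

theorem IsStieltjesFn.congr {f g : ℝ → ℝ} (hf : IsStieltjesFn f) (hfg : EqOn g f (Ioi 0)) :
    IsStieltjesFn g := by
  obtain ⟨d, q, hd, hq, Δ, hΔ, hΔ_int, hrep⟩ := hf
  exact ⟨d, q, hd, hq, Δ, hΔ, hΔ_int, fun l hl => (hfg hl).trans (hrep l hl)⟩

theorem IsStieltjesFn.const_mul {f : ℝ → ℝ} (hf : IsStieltjesFn f) {a : ℝ} (ha : 0 ≤ a) :
    IsStieltjesFn fun t => a * f t := by
  obtain ⟨d, q, hd, hq, Δ, hΔ, hΔ_int, hrep⟩ := hf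
  refine ⟨a * d, a * q, by positivity, by positivity, ENNReal.ofReal a • Δ, by simp [hΔ], ?_,
    fun l hl => ?_⟩
  · rw [lintegral_smul_measure]
    exact ENNReal.mul_lt_top ENNReal.ofReal_lt_top hΔ_int
  · simp only [hrep l hl, integral_smul_measure, ENNReal.toReal_ofReal ha, smul_eq_mul]
    ring

theorem isStieltjesFn_of_density {ν : Measure ℝ} (hν : ν {u | u ≤ 0} = 0) {w : ℝ → ℝ}
    (hw : Measurable w) (hw_nonneg : ∀ u, 0 ≤ w u) (hinteg : Integrable (fun u => w u / (1 + u)) ν)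
    {d q : ℝ} (hd : 0 ≤ d) (hq : 0 ≤ q) :
    IsStieltjesFn fun t => d + q / t + ∫ u, w u / (t + u) ∂ν := by
  refine ⟨d, q, hd, hq, ν.withDensity fun u => ENNReal.ofReal (w u),
    withDensity_absolutelyContinuous _ _ hν, ?_, fun t _ => ?_⟩
  · rw [lintegral_withDensity_eq_lintegral_mul _ (by fun_prop) (by fun_prop)]
    refine lt_of_eq_of_lt (lintegral_congr fun u => ?_) hinteg.lintegral_lt_top
    rw [Pi.mul_apply, ← ENNReal.ofReal_mul (hw_nonneg u), div_eq_mul_inv]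
  · rw [integral_withDensity_eq_integral_toReal_smul (by fun_prop)
      (ae_of_all _ fun u => ENNReal.ofReal_lt_top)]
    simp only [ENNReal.toReal_ofReal (hw_nonneg _), smul_eq_mul, div_eq_mul_inv]

end StieltjesTransform

theorem mul_toReal_lintegral_rpow_neg_eq {φ Ψ : ℝ → ℝ} {m ν : Measure ℝ} [IsFiniteMeasure m]
    {t p c γ : ℝ} (hm_pos : ∀ᵐ x ∂m, 0 < x) (ht : 0 < t)
    (hlaplace : ∀ l, 0 ≤ l → ∫ x, Real.exp (-l * x) ∂m = Real.exp (-t * φ l)) (h0 : φ 0 = 0)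
    (hinf : Tendsto φ atTop atTop) (hinv : InvOn Ψ φ (Ici 0) (Ici 0)) (hp : 0 < p) [SFinite ν]
    (hν_pos : ∀ᵐ x ∂ν, 0 < x) (hinteg : Integrable (fun x => x * min x 1) ν) (hc : 0 ≤ c)
    (hΨ : ∀ l, 0 < l → Ψ l ^ p = centeredExponent c γ ν l) :
    t * (∫⁻ x, ENNReal.ofReal (x ^ (-p)) ∂m).toReal =
      1 / Real.Gamma (p + 1) * (c + γ ^ 2 / t + ∫ u, u ^ 2 / (t + u) ∂ν) := by
  have hgamma_pos : 0 < Real.Gamma (p + 1) := Real.Gamma_pos_of_pos (by positivity)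
  have hjump_nonneg := integral_sq_div_add_nonneg hν_pos ht
  have hmoment : ENNReal.ofReal (Real.Gamma (p + 1)) * ∫⁻ x, ENNReal.ofReal (x ^ (-p)) ∂m =
      ENNReal.ofReal (t⁻¹ * (c + γ ^ 2 / t + ∫ u, u ^ 2 / (t + u) ∂ν)) := by
    rw [gamma_mul_lintegral_rpow_neg_eq_lintegral_inverse_rpow hm_pos ht hlaplace h0 hinf hinv hp,
      ← lintegral_centeredExponent_expMeasure hν_pos hinteg hc γ ht]
    refine lintegral_congr_ae ?_
    filter_upwards [ae_pos_expMeasure ht] with y hy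
    rw [hΨ y hy]
  have hreal := congrArg ENNReal.toReal hmoment
  rw [ENNReal.toReal_mul, ENNReal.toReal_ofReal hgamma_pos.le,
    ENNReal.toReal_ofReal (by positivity)] at hreal
  rw [one_div, eq_inv_mul_iff_mul_eq₀ hgamma_pos.ne', mul_left_comm, hreal,
    mul_inv_cancel_left₀ ht.ne']

theorem stmt_9_general {φ Ψ : ℝ → ℝ} (h0 : φ 0 = 0) (hinf : Tendsto φ atTop atTop)
    (hinv : InvOn Ψ φ (Ici 0) (Ici 0)) {μ : ℝ → Measure ℝ}
    (hprob : ∀ t, 0 < t → IsProbabilityMeasure (μ t)) (hsupp : ∀ t, 0 < t → μ t {x | x ≤ 0} = 0)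
    (hlaplace : ∀ t, 0 < t → ∀ l, 0 ≤ l →
      ∫ x, Real.exp (-l * x) ∂(μ t) = Real.exp (-t * φ l))
    {p : ℝ} (hp : 0 < p) {β γ : ℝ} {ν : Measure ℝ} (hν : IsLevyMeasureOnIoi ν)
    (hΨ : ∀ l, 0 ≤ l → Ψ l ^ p = levyKhintchine β γ ν l) :
    Integrable (fun x => x ^ 3 / (1 + x ^ 2)) ν ∧
    0 ≤ β - ∫ x, x ^ 3 / (1 + x ^ 2) ∂ν ∧
    Tendsto (deriv (fun y => Ψ y ^ p)) (nhdsWithin 0 (Ioi 0))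
      (nhds (β - ∫ x, x ^ 3 / (1 + x ^ 2) ∂ν)) ∧
    (∀ t, 0 < t →
      t * (∫⁻ x, ENNReal.ofReal (x ^ (-p)) ∂(μ t)).toReal =
        (1 / Real.Gamma (p + 1)) *
          ((β - ∫ x, x ^ 3 / (1 + x ^ 2) ∂ν) + γ ^ 2 / t + ∫ u, u ^ 2 / (t + u) ∂ν)) ∧
    IsStieltjesFn (fun t => t * (∫⁻ x, ENNReal.ofReal (x ^ (-p)) ∂(μ t)).toReal) := by
  have := hν.sFinite
  have hmaps : MapsTo Ψ (Ici 0) (Ici 0) := by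
    have := hprob 1 one_pos
    exact mapsTo_inverse_laplaceExponent (ae_pos_of_measure_nonpos_eq_zero (hsupp 1 one_pos))
      one_pos (hlaplace 1 one_pos) h0 hinf hinv.1
  obtain ⟨hcube, hcube_le⟩ := hν.integrable_cube_div_and_integral_le fun l hl =>
    (Real.rpow_nonneg (hmaps hl.le) p).trans_eq (hΨ l hl.le)
  have hinteg := hν.integrable_mul_min_one hcube
  have hdrift_nonneg := sub_nonneg.2 hcube_le
  have hcentered (l : ℝ) (hl : 0 < l) :=
    (hΨ l hl.le).trans (hν.levyKhintchine_eq_centeredExponent hcube β γ hl.le)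
  have hformula (t : ℝ) (ht : 0 < t) := by
    have := hprob t ht
    exact mul_toReal_lintegral_rpow_neg_eq (ae_pos_of_measure_nonpos_eq_zero (hsupp t ht)) ht
      (hlaplace t ht) h0 hinf hinv hp hν.ae_pos hinteg hdrift_nonneg hcentered
  refine ⟨hcube, hdrift_nonneg, tendsto_deriv_of_eqOn_centeredExponent hν.ae_pos hinteg hcentered,
    hformula, .congr (.const_mul ?_ (one_div_nonneg.2 (Real.Gamma_pos_of_pos (by linarith)).le))
      hformula⟩
  exact isStieltjesFn_of_density hν.measure_nonpos (by fun_prop) sq_nonneg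
    (integrable_sq_div_add hν.ae_pos hinteg one_pos) hdrift_nonneg (sq_nonneg γ)

/-- Let `φ` be a non-affine Bernstein function with `φ(0) = 0`, `φ(∞) = ∞`,
inverse `Ψ`, marginal subordinator laws `(μ_t)_{t>0}`, and `p ≥ 1` with
`Ψ^p ∈ Lle(0,∞)` with quadruple `(0, β_p, γ_p, ν_p)`. Then
`(Ψ^p)'(0+) = β_p − ∫ x³/(1+x²) ν_p(dx) ∈ [0,∞)`, and for every `t > 0`,
`t·E[ξ_t^{−p}] = (1/Γ(p+1)) [(Ψ^p)'(0+) + γ_p²/t + ∫ u²/(t+u) ν_p(du)]`; in particular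
`t ↦ t·E[ξ_t^{−p}]` is a Stieltjes transform. -/
theorem stmt_9 (φ Ψ : ℝ → ℝ) (hφ : IsBernsteinFn φ)
    (hnonaffine : ¬∃ c d : ℝ, ∀ x : ℝ, 0 ≤ x → φ x = c + d * x)
    (h0 : φ 0 = 0) (hinf : Tendsto φ atTop atTop) (hinv : Set.InvOn Ψ φ (Ici 0) (Ici 0))
    (μ : ℝ → Measure ℝ) (hprob : ∀ t : ℝ, 0 < t → IsProbabilityMeasure (μ t))
    (hsupp : ∀ t : ℝ, 0 < t → μ t {x | x ≤ 0} = 0)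
    (hlaplace : ∀ t : ℝ, 0 < t → ∀ l : ℝ, 0 ≤ l →
      ∫ x, Real.exp (-l * x) ∂(μ t) = Real.exp (-t * φ l))
    (p : ℝ) (hp : 1 ≤ p)
    (β γ : ℝ) (hγ : 0 ≤ γ) (ν : Measure ℝ) (hν_supp : ν {x | x ≤ 0} = 0)
    (hν_int : (∫⁻ x, ENNReal.ofReal (min (x ^ 2) 1) ∂ν) < ⊤)
    (hLle : ∀ l : ℝ, 0 ≤ l →
      Ψ l ^ p = β * l + γ ^ 2 / 2 * l ^ 2 +
        ∫ x, (Real.exp (-l * x) - 1 + l * x / (1 + x ^ 2)) ∂ν) :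
    Integrable (fun x => x ^ 3 / (1 + x ^ 2)) ν ∧
    0 ≤ β - ∫ x, x ^ 3 / (1 + x ^ 2) ∂ν ∧
    Tendsto (deriv (fun y => Ψ y ^ p)) (nhdsWithin 0 (Ioi 0))
      (nhds (β - ∫ x, x ^ 3 / (1 + x ^ 2) ∂ν)) ∧
    (∀ t : ℝ, 0 < t →
      t * (∫⁻ x, ENNReal.ofReal (x ^ (-p)) ∂(μ t)).toReal =
        (1 / Real.Gamma (p + 1)) *
          ((β - ∫ x, x ^ 3 / (1 + x ^ 2) ∂ν) + γ ^ 2 / t + ∫ u, u ^ 2 / (t + u) ∂ν)) ∧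
    IsStieltjesFn (fun t => t * (∫⁻ x, ENNReal.ofReal (x ^ (-p)) ∂(μ t)).toReal) := by
  exact stmt_9_general h0 hinf hinv hprob hsupp hlaplace (zero_lt_one.trans_le hp)
    ⟨hν_supp, hν_int⟩ hLle
end

section
/- For every s ∈ ℝ, ∫₀^∞ cos(s x) · x / ((1+x²) · sinh(πx/2)) dx = 2·sinh(s)·arctan(e^{−s}) + (π/2)·e^{−s} − 1. In particular, taking s = 0, ∫₀^∞ x / ((1+x²) · sinh(πx/2)) dx = π/2 − 1. -/
open MeasureTheory Set

/-!
Since `x / (1 + x²) = ∫₀^∞ e^{-t} sin (t x) dt`, Fubini's theorem turns the integral into the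
Laplace transform at `1` of `t ↦ ∫₀^∞ sin (t x) cos (s x) / sinh (π x / 2) dx`, which by the
addition formula is the mean of the sine transforms of `1 / sinh (π x / 2)` at `t + s` and `t - s`.
Expanding `1 / sinh` in odd exponentials and integrating termwise, this sine transform becomes the
Mittag-Leffler series of `tanh`, obtained from the cotangent series through
`tan z = cot z - 2 cot (2 z)`. Finally `e^{-u} tanh u` has the antiderivative
`e^{-u} - 2 arctan (e^{-u})`.

The function `1 / sinh` is not integrable at `0`, but `x / sinh x` is; writing
`sin (a x) = a x sinc (a x)` with `|sinc| ≤ 1` therefore gives the domination needed for both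
interchanges of limits.
-/

section TangentExpansion

open Complex
open scoped Real

-- No hypothesis excludes the poles: at a zero of `sin` or `cos` all three terms are `0`, since
-- `x / 0 = 0`.
lemma tan_eq_cot_sub_two_mul_cot_two_mul (z : ℂ) : tan z = cot z - 2 * cot (2 * z) := by
  rw [tan, cot, cot, sin_two_mul, cos_two_mul']
  rcases eq_or_ne (sin z) 0 with hsin | hsin
  · simp [hsin]
  rcases eq_or_ne (cos z) 0 with hcos | hcos
  · simp [hcos]
  field_simp
  ring

lemma hasSum_cotTerm {w : ℂ} (hw : w ∈ integerComplement) :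
    HasSum (cotTerm w) (π * cot (π * w) - 1 / w) := by
  rw [cot_series_rep' hw]
  exact (summable_cotTerm hw).hasSum

lemma cotTerm_two_mul_add_one (w : ℂ) (k : ℕ) :
    cotTerm w (2 * k + 1) = 1 / 2 * cotTerm (w / 2) k := by
  rw [cotTerm, cotTerm,
    show w - (↑(2 * k + 1) + 1) = 2 * (w / 2 - (k + 1)) by push_cast; ring,
    show w + (↑(2 * k + 1) + 1) = 2 * (w / 2 + (k + 1)) by push_cast; ring]
  simp only [one_div, mul_inv]
  ring

lemma div_two_mem_integerComplement {w : ℂ} (hw : w ∈ integerComplement) :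
    w / 2 ∈ integerComplement := by
  rintro ⟨n, hn⟩
  exact hw ⟨2 * n, by push_cast; rw [hn]; ring⟩

lemma hasSum_tan {w : ℂ} (hw : w ∈ integerComplement) :
    HasSum (fun k : ℕ ↦ 2 * w / ((2 * k + 1) ^ 2 - w ^ 2)) (π / 2 * tan (π / 2 * w)) := by
  have htotal := hasSum_cotTerm hw
  have hodd : HasSum (fun k ↦ cotTerm w (2 * k + 1))
      (1 / 2 * (π * cot (π * (w / 2)) - 1 / (w / 2))) := by
    simpa only [cotTerm_two_mul_add_one] using
      (hasSum_cotTerm (div_two_mem_integerComplement hw)).mul_left (1 / 2)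
  have heven : HasSum (fun k ↦ cotTerm w (2 * k)) (-(π / 2 * tan (π / 2 * w))) := by
    have hsummable : Summable fun k ↦ cotTerm w (2 * k) :=
      htotal.summable.comp_injective (mul_right_injective₀ two_ne_zero)
    have hadd := (hsummable.hasSum.even_add_odd hodd).unique htotal
    rw [show -(π / 2 * tan (π / 2 * w)) = ∑' k, cotTerm w (2 * k) by
      rw [eq_sub_of_add_eq hadd, tan_eq_cot_sub_two_mul_cot_two_mul,
        show (2 : ℂ) * (π / 2 * w) = π * w by ring, show (π : ℂ) / 2 * w = π * (w / 2) by ring]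
      simp only [one_div, inv_div]
      ring]
    exact hsummable.hasSum
  convert! heven.neg using 1
  · ext k
    rw [cotTerm_identity hw, ← div_eq_mul_one_div, ← div_neg]
    push_cast
    ring
  · rw [neg_neg]

lemma ofReal_mul_I_mem_integerComplement {y : ℝ} (hy : y ≠ 0) :
    (y * I : ℂ) ∈ integerComplement := by
  rintro ⟨n, hn⟩
  exact hy (by simpa using (congrArg im hn).symm)

lemma hasSum_tanh (y : ℝ) :
    HasSum (fun k : ℕ ↦ 2 * y / ((2 * k + 1) ^ 2 + y ^ 2)) (π / 2 * Real.tanh (π / 2 * y)) := by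
  rcases eq_or_ne y 0 with rfl | hy
  · simp
  rw [← hasSum_ofReal]
  convert! (hasSum_tan (ofReal_mul_I_mem_integerComplement hy)).mul_left (-I) using 1
  · ext k
    push_cast
    rw [mul_pow, I_sq]
    linear_combination 2 * y / ((2 * (k : ℂ) + 1) ^ 2 + y ^ 2) * I_sq
  · push_cast
    rw [← mul_assoc (π / 2 : ℂ), tan_mul_I]
    linear_combination π / 2 * tanh (π / 2 * y) * I_sq

end TangentExpansion

open Real

section SineTransform

lemma mul_sinc (x : ℝ) : x * sinc x = sin x := by
  rcases eq_or_ne x 0 with rfl | hx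
  · simp
  · rw [sinc_of_ne_zero hx, mul_div_cancel₀ _ hx]

variable {μ : Measure ℝ} {g : ℝ → ℝ}

lemma integrable_sin_mul (hg : Integrable (fun x ↦ x * g x) μ) (a : ℝ) :
    Integrable (fun x ↦ sin (a * x) * g x) μ := by
  have hsinc : Integrable (fun x ↦ a * (sinc (a * x) * (x * g x))) μ :=
    (hg.bdd_mul (continuous_sinc.comp (continuous_const_mul a)).aestronglyMeasurable
      (.of_forall fun x ↦ abs_sinc_le_one (a * x))).const_mul a
  refine hsinc.congr (.of_forall fun x ↦ ?_)
  simp only [← mul_sinc (a * x)]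
  ring

lemma integral_norm_sin_mul_le (hg : Integrable (fun x ↦ x * g x) μ) (a : ℝ) :
    ∫ x, ‖sin (a * x) * g x‖ ∂μ ≤ |a| * ∫ x, ‖x * g x‖ ∂μ := by
  rw [← integral_const_mul]
  refine integral_mono (integrable_sin_mul hg a).norm (hg.norm.const_mul |a|) fun x ↦ ?_
  simp only [norm_mul, norm_eq_abs, ← mul_assoc, ← abs_mul]
  rw [abs_mul, abs_mul (a * x)]
  exact mul_le_mul_of_nonneg_right abs_sin_le_abs (abs_nonneg _)

lemma integral_exp_neg_mul_mul_sin {b : ℝ} (hb : 0 < b) (a : ℝ) :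
    ∫ x in Ioi 0, exp (-b * x) * sin (a * x) = a / (a ^ 2 + b ^ 2) := by
  have hre : (-b + a * Complex.I : ℂ).re < 0 := by simpa using hb
  have him (x : ℝ) : exp (-b * x) * sin (a * x) =
      Complex.imCLM (Complex.exp ((-b + a * Complex.I) * x)) := by
    simp [Complex.exp_im]
  simp only [him]
  rw [Complex.imCLM.integral_comp_comm (integrableOn_exp_mul_complex_Ioi hre 0),
    integral_exp_mul_complex_Ioi hre 0]
  simp [Complex.div_im, Complex.normSq_apply]
  ring

lemma integrableOn_mul_exp_neg_mul {b : ℝ} (hb : 0 < b) :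
    IntegrableOn (fun x ↦ x * exp (-b * x)) (Ioi 0) := by
  simpa using integrableOn_rpow_mul_exp_neg_mul_rpow (p := 1) (s := 1) (by norm_num) one_pos hb

lemma integral_mul_exp_neg_mul {b : ℝ} (hb : 0 < b) :
    ∫ x in Ioi 0, x * exp (-b * x) = 1 / b ^ 2 := by
  have hgamma := integral_rpow_mul_exp_neg_mul_Ioi (a := 2) two_pos hb
  norm_num at hgamma
  simpa using hgamma

lemma integral_div_sq_add_sq_mul_eq_integral_exp_neg_mul [SFinite μ]
    (hg : Integrable (fun x ↦ x * g x) μ) {c : ℝ} (hc : 0 < c) :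
    ∫ x, x / (x ^ 2 + c ^ 2) * g x ∂μ =
      ∫ t in Ioi 0, exp (-c * t) * ∫ x, sin (t * x) * g x ∂μ := by
  have hint : Integrable (fun p : ℝ × ℝ ↦ exp (-c * p.2) * (sin (p.2 * p.1) * g p.1))
      (μ.prod (volume.restrict (Ioi 0))) := by
    have hsinc : Integrable
        (fun p : ℝ × ℝ ↦ sinc (p.2 * p.1) * (p.1 * g p.1 * (p.2 * exp (-c * p.2))))
        (μ.prod (volume.restrict (Ioi 0))) :=
      (hg.mul_prod (integrableOn_mul_exp_neg_mul hc)).bdd_mul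
        (continuous_sinc.comp (by fun_prop)).aestronglyMeasurable
        (.of_forall fun p ↦ abs_sinc_le_one (p.2 * p.1))
    refine hsinc.congr (.of_forall fun p ↦ ?_)
    simp only [← mul_sinc (p.2 * p.1)]
    ring
  calc ∫ x, x / (x ^ 2 + c ^ 2) * g x ∂μ
      = ∫ x, (∫ t in Ioi 0, exp (-c * t) * (sin (t * x) * g x)) ∂μ := by
        refine integral_congr_ae (.of_forall fun x ↦ ?_)
        simp only [← integral_exp_neg_mul_mul_sin hc, ← integral_mul_const, mul_assoc,
          mul_comm x]
    _ = ∫ t in Ioi 0, (∫ x, exp (-c * t) * (sin (t * x) * g x) ∂μ) := integral_integral_swap hint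
    _ = ∫ t in Ioi 0, exp (-c * t) * ∫ x, sin (t * x) * g x ∂μ := by
        simp only [integral_const_mul]

end SineTransform

section HyperbolicCosecant

lemma hasSum_inv_sinh {y : ℝ} (hy : 0 < y) :
    HasSum (fun n : ℕ ↦ 2 * exp (-(2 * n + 1) * y)) (sinh y)⁻¹ := by
  have hlt : exp (-2 * y) < 1 := Real.exp_lt_one_iff.2 (by linarith)
  convert! (hasSum_geometric_of_lt_one (exp_pos _).le hlt).mul_left (2 * exp (-y)) using 1
  · ext n
    rw [← exp_nat_mul, mul_assoc, ← exp_add]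
    ring_nf
  · have hsinh : sinh y = (1 - exp (-2 * y)) / (2 * exp (-y)) := by
      rw [sinh_eq, show -2 * y = -y + -y by ring, exp_add, exp_neg]
      field_simp
    rw [hsinh, inv_div, div_eq_mul_inv]

lemma mul_exp_le_sinh_two_mul {y : ℝ} (hy : 0 ≤ y) : y * exp y ≤ sinh (2 * y) := by
  have hcosh : exp y ≤ 2 * cosh y := by linarith [cosh_eq y, exp_pos (-y)]
  calc y * exp y ≤ sinh y * (2 * cosh y) := by
        gcongr
        exacts [self_le_sinh_iff.2 hy]
    _ = sinh (2 * y) := by rw [sinh_two_mul]; ring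

lemma integrableOn_mul_inv_sinh {b : ℝ} (hb : 0 < b) :
    IntegrableOn (fun x ↦ x * (sinh (b * x))⁻¹) (Ioi 0) := by
  have hdom : IntegrableOn (fun x ↦ 2 / b * exp (-(b / 2) * x)) (Ioi 0) :=
    (integrableOn_exp_mul_Ioi (by linarith) 0).const_mul _
  refine hdom.mono' (Measurable.aestronglyMeasurable (by fun_prop)) ?_
  filter_upwards [ae_restrict_mem measurableSet_Ioi] with x (hx : 0 < x)
  have hle : b / 2 * x * exp (b / 2 * x) ≤ sinh (b * x) := by
    convert mul_exp_le_sinh_two_mul (y := b / 2 * x) (by positivity) using 2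
    ring
  have hsinh : 0 < sinh (b * x) := sinh_pos_iff.2 (by positivity)
  rw [norm_of_nonneg (mul_nonneg hx.le (inv_nonneg.2 hsinh.le))]
  calc x * (sinh (b * x))⁻¹ ≤ x * (b / 2 * x * exp (b / 2 * x))⁻¹ := by gcongr
    _ = 2 / b * exp (-(b / 2) * x) := by
      rw [neg_mul, exp_neg]
      field_simp

lemma integral_norm_sin_mul_exp_neg_mul_le {b : ℝ} (hb : 0 < b) (a : ℝ) :
    ∫ x in Ioi 0, ‖sin (a * x) * exp (-b * x)‖ ≤ |a| / b ^ 2 := by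
  have hnorm : ∫ x in Ioi 0, ‖x * exp (-b * x)‖ = 1 / b ^ 2 := by
    rw [← integral_mul_exp_neg_mul hb]
    refine setIntegral_congr_fun measurableSet_Ioi fun x (hx : 0 < x) ↦ ?_
    exact norm_of_nonneg (by positivity)
  calc ∫ x in Ioi 0, ‖sin (a * x) * exp (-b * x)‖
      ≤ |a| * ∫ x in Ioi 0, ‖x * exp (-b * x)‖ :=
        integral_norm_sin_mul_le (integrableOn_mul_exp_neg_mul hb) a
    _ = |a| / b ^ 2 := by rw [hnorm, mul_one_div]

lemma hasSum_integral_sin_mul_exp_neg_odd_mul {b : ℝ} (hb : 0 < b) (a : ℝ) :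
    HasSum (fun n : ℕ ↦ 2 * ∫ x in Ioi 0, sin (a * x) * exp (-((2 * n + 1) * b) * x))
      (∫ x in Ioi 0, sin (a * x) * (sinh (b * x))⁻¹) := by
  let r : ℕ → ℝ := fun n ↦ (2 * n + 1) * b
  have hr (n : ℕ) : 0 < r n := by positivity
  let F : ℕ → ℝ → ℝ := fun n x ↦ 2 * (sin (a * x) * exp (-r n * x))
  have hint (n : ℕ) : IntegrableOn (F n) (Ioi 0) :=
    (integrable_sin_mul (integrableOn_mul_exp_neg_mul (hr n)) a).const_mul 2
  have hnorm (n : ℕ) :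
      ∫ x in Ioi 0, ‖F n x‖ ≤ 2 * |a| / b ^ 2 * (1 / ((2 * n + 1 : ℕ) : ℝ) ^ 2) := by
    simp only [F, norm_mul (2 : ℝ), integral_const_mul, norm_ofNat]
    calc 2 * ∫ x in Ioi 0, ‖sin (a * x) * exp (-r n * x)‖ ≤ 2 * (|a| / r n ^ 2) := by
          gcongr
          exact integral_norm_sin_mul_exp_neg_mul_le (hr n) a
      _ = 2 * |a| / b ^ 2 * (1 / ((2 * n + 1 : ℕ) : ℝ) ^ 2) := by
          simp only [r]
          push_cast
          field_simp
  have hsummable : Summable fun n ↦ ∫ x in Ioi 0, ‖F n x‖ := by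
    have hsq : Summable fun n : ℕ ↦ 1 / ((2 * n + 1 : ℕ) : ℝ) ^ 2 :=
      (summable_one_div_nat_pow.2 one_lt_two).comp_injective fun m n h ↦ by simpa using h
    exact (hsq.mul_left _).of_nonneg_of_le (fun n ↦ integral_nonneg fun x ↦ norm_nonneg _) hnorm
  have hexpand : ∫ x in Ioi 0, sin (a * x) * (sinh (b * x))⁻¹ = ∫ x in Ioi 0, ∑' n, F n x := by
    refine setIntegral_congr_fun measurableSet_Ioi fun x (hx : 0 < x) ↦ ?_
    have hbx : 0 < b * x := by positivity
    refine (((hasSum_inv_sinh hbx).mul_left (sin (a * x))).congr_fun fun n ↦ ?_).tsum_eq.symm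
    simp only [F, r]
    ring_nf
  rw [hexpand]
  simpa only [F, r, integral_const_mul] using
    hasSum_integral_of_summable_integral_norm hint hsummable

lemma integral_sin_mul_inv_sinh {b : ℝ} (hb : 0 < b) (a : ℝ) :
    ∫ x in Ioi 0, sin (a * x) * (sinh (b * x))⁻¹ = π / (2 * b) * tanh (π / (2 * b) * a) := by
  have hmittag : HasSum (fun n : ℕ ↦ 2 * (a / (a ^ 2 + ((2 * n + 1) * b) ^ 2)))
      (π / (2 * b) * tanh (π / (2 * b) * a)) := by
    convert! (hasSum_tanh (a / b)).mul_left (1 / b) using 1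
    · ext n
      field_simp
      ring
    · rw [show π / 2 * (a / b) = π / (2 * b) * a by ring]
      ring
  refine (hasSum_integral_sin_mul_exp_neg_odd_mul hb a).unique (hmittag.congr_fun fun n ↦ ?_)
  simp only [mul_comm (sin _)]
  rw [integral_exp_neg_mul_mul_sin (by positivity)]

lemma integral_sin_mul_cos_mul_inv_sinh {b : ℝ} (hb : 0 < b) (s t : ℝ) :
    ∫ x in Ioi 0, sin (t * x) * (cos (s * x) * (sinh (b * x))⁻¹) =
      π / (2 * b) *
        ((tanh (π / (2 * b) * (t + s)) + tanh (π / (2 * b) * (t - s))) / 2) := by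
  have hint := integrable_sin_mul (integrableOn_mul_inv_sinh hb)
  calc ∫ x in Ioi 0, sin (t * x) * (cos (s * x) * (sinh (b * x))⁻¹)
      = ∫ x in Ioi 0, (sin ((t + s) * x) * (sinh (b * x))⁻¹ +
          sin ((t - s) * x) * (sinh (b * x))⁻¹) / 2 := by
        refine integral_congr_ae (.of_forall fun x ↦ ?_)
        simp only [add_mul, sub_mul, sin_add, sin_sub]
        ring
    _ = _ := by
        rw [integral_div, integral_add (hint _) (hint _), integral_sin_mul_inv_sinh hb,
          integral_sin_mul_inv_sinh hb]
        ring

lemma integrableOn_mul_cos_mul_inv_sinh {b : ℝ} (hb : 0 < b) (s : ℝ) :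
    IntegrableOn (fun x ↦ x * (cos (s * x) * (sinh (b * x))⁻¹)) (Ioi 0) := by
  simp only [mul_left_comm _ (cos _)]
  exact (integrableOn_mul_inv_sinh hb).bdd_mul (Continuous.aestronglyMeasurable (by fun_prop))
    (.of_forall fun x ↦ abs_cos_le_one (s * x))

end HyperbolicCosecant

section TanhLaplace

lemma continuous_tanh : Continuous tanh := by
  simp only [funext tanh_eq_sinh_div_cosh]
  exact continuous_sinh.div continuous_cosh fun x ↦ (cosh_pos x).ne'

lemma integrableOn_exp_neg_mul_tanh_add (s : ℝ) :
    IntegrableOn (fun t ↦ exp (-t) * tanh (t + s)) (Ioi 0) :=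
  (integrableOn_exp_neg_Ioi 0).mul_bdd
    (continuous_tanh.comp (continuous_add_const s)).aestronglyMeasurable
    (.of_forall fun t ↦ (abs_tanh_lt_one (t + s)).le)

lemma hasDerivAt_exp_neg_sub_two_mul_arctan_exp_neg (u : ℝ) :
    HasDerivAt (fun u ↦ exp (-u) - 2 * arctan (exp (-u))) (exp (-u) * tanh u) u := by
  have hexp : HasDerivAt (fun u ↦ exp (-u)) (-exp (-u)) u := by
    simpa using (hasDerivAt_id u).neg.exp
  refine (hexp.sub (hexp.arctan.const_mul 2)).congr_deriv ?_
  rw [tanh_eq, exp_neg]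
  field_simp
  ring

lemma tendsto_exp_neg_sub_two_mul_arctan_exp_neg :
    Filter.Tendsto (fun u ↦ exp (-u) - 2 * arctan (exp (-u))) Filter.atTop (nhds 0) := by
  have hcont : Continuous fun v ↦ v - 2 * arctan v := by fun_prop
  simpa [Function.comp_def] using (hcont.tendsto 0).comp tendsto_exp_neg_atTop_nhds_zero

lemma integral_exp_neg_mul_tanh_add (s : ℝ) :
    ∫ t in Ioi 0, exp (-t) * tanh (t + s) = 2 * exp s * arctan (exp (-s)) - 1 := by
  let G : ℝ → ℝ := fun t ↦ exp s * (exp (-(t + s)) - 2 * arctan (exp (-(t + s))))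
  have hderiv (t : ℝ) : HasDerivAt G (exp (-t) * tanh (t + s)) t := by
    refine (((hasDerivAt_exp_neg_sub_two_mul_arctan_exp_neg (t + s)).comp_add_const t s).const_mul
      (exp s)).congr_deriv ?_
    rw [← mul_assoc, ← exp_add]
    ring_nf
  have hlim : Filter.Tendsto G Filter.atTop (nhds 0) := by
    rw [← mul_zero (exp s)]
    exact (tendsto_exp_neg_sub_two_mul_arctan_exp_neg.comp
      (Filter.tendsto_atTop_add_const_right _ s Filter.tendsto_id)).const_mul (exp s)
  rw [integral_Ioi_of_hasDerivAt_of_tendsto' (fun t _ ↦ hderiv t)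
    (integrableOn_exp_neg_mul_tanh_add s) hlim]
  have hexp : exp s * exp (-s) = 1 := by rw [← exp_add, add_neg_cancel, exp_zero]
  simp only [G, zero_add]
  linear_combination -hexp

lemma integral_exp_neg_mul_tanh_add_add_tanh_sub (s : ℝ) :
    ∫ t in Ioi 0, exp (-t) * ((tanh (t + s) + tanh (t - s)) / 2) =
      2 * sinh s * arctan (exp (-s)) + π / 2 * exp (-s) - 1 := by
  have harctan : arctan (exp s) = π / 2 - arctan (exp (-s)) := by
    rw [← arctan_inv_of_pos (exp_pos _), exp_neg, inv_inv]
  simp only [← mul_div_assoc, mul_add, sub_eq_add_neg _ s]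
  rw [integral_div, integral_add (integrableOn_exp_neg_mul_tanh_add s)
    (integrableOn_exp_neg_mul_tanh_add (-s)), integral_exp_neg_mul_tanh_add,
    integral_exp_neg_mul_tanh_add, neg_neg, harctan, sinh_eq]
  ring

end TanhLaplace

/-- For every `s ∈ ℝ`,
`∫₀^∞ cos(s x) · x / ((1+x²) · sinh(πx/2)) dx = 2 sinh(s) arctan(e^{−s}) + (π/2) e^{−s} − 1`;
in particular, at `s = 0`, `∫₀^∞ x / ((1+x²) sinh(πx/2)) dx = π/2 − 1`. -/
theorem stmt_12 :
    (∀ s : ℝ,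
      ∫ x in Ioi (0 : ℝ),
          Real.cos (s * x) * x / ((1 + x ^ 2) * Real.sinh (Real.pi * x / 2)) =
        2 * Real.sinh s * Real.arctan (Real.exp (-s)) + Real.pi / 2 * Real.exp (-s) - 1) ∧
    (∫ x in Ioi (0 : ℝ), x / ((1 + x ^ 2) * Real.sinh (Real.pi * x / 2)) =
        Real.pi / 2 - 1) := by
  have htransform (s : ℝ) :
      ∫ x in Ioi (0 : ℝ), cos (s * x) * x / ((1 + x ^ 2) * sinh (π * x / 2)) =
        2 * sinh s * arctan (exp (-s)) + π / 2 * exp (-s) - 1 := by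
    have hb : 0 < π / 2 := by positivity
    have hscale : π / (2 * (π / 2)) = 1 := by field_simp
    calc ∫ x in Ioi (0 : ℝ), cos (s * x) * x / ((1 + x ^ 2) * sinh (π * x / 2))
        = ∫ x in Ioi 0, x / (x ^ 2 + 1 ^ 2) * (cos (s * x) * (sinh (π / 2 * x))⁻¹) := by
          congr! 2 with x
          rw [one_pow, add_comm 1, mul_div_right_comm π, ← div_eq_mul_inv, div_mul_div_comm,
            mul_comm x]
      _ = ∫ t in Ioi 0, exp (-1 * t) *
            ∫ x in Ioi 0, sin (t * x) * (cos (s * x) * (sinh (π / 2 * x))⁻¹) :=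
          integral_div_sq_add_sq_mul_eq_integral_exp_neg_mul
            (integrableOn_mul_cos_mul_inv_sinh hb s) one_pos
      _ = ∫ t in Ioi 0, exp (-t) * ((tanh (t + s) + tanh (t - s)) / 2) := by
          simp only [integral_sin_mul_cos_mul_inv_sinh hb, hscale, one_mul, neg_one_mul]
      _ = _ := integral_exp_neg_mul_tanh_add_add_tanh_sub s
  exact ⟨htransform, by simpa using htransform 0⟩
end
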